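/- arXiv:2508.18270 — 8 statements merged into one kernel-verified Lean document; each statement's English description precedes it below -/
import Mathlib

section
/- Let P be a finite set of primes with 3 ∉ P, and set N = 3·∏_{p∈P} p. Consider the moduli {3} ∪ {3p : p ∈ P}. Then the minimum, over all choices of residues a₀ (mod 3) and a_p (mod 3p) for p ∈ P, of the number of residues r with 0 ≤ r < N satisfying r ≢ a₀ (mod 3) and r ≢ a_p (mod 3p) for all p ∈ P, equals the minimum over all partitions P = P₁ ⊔ P₂ of the quantity ∏_{p∈P₁}(p−1)·∏_{p∈P₂} p + ∏_{p∈P₁} p·∏_{p∈P₂}(p−1). -/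
lemma aux_crt (M p : ℕ) (hM : 0 < M) (hp : 0 < p) (hc : M.Coprime p) (A B : ℕ → Prop)
    [DecidablePred A] [DecidablePred B]
    (hA : ∀ r, A (r % M) ↔ A r) (hB : ∀ r, B (r % p) ↔ B r) :
    ((Finset.range (M * p)).filter fun r => A r ∧ B r).card
      = ((Finset.range M).filter A).card * ((Finset.range p).filter B).card := by
  rw [← Finset.card_product]
  refine Finset.card_bij (fun r _ => (r % M, r % p)) ?_ ?_ ?_
  · intro r hr
    simp only [Finset.mem_filter, Finset.mem_range, Finset.mem_product] at hr ⊢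
    exact ⟨⟨Nat.mod_lt _ hM, (hA r).2 hr.2.1⟩, ⟨Nat.mod_lt _ hp, (hB r).2 hr.2.2⟩⟩
  · intro r hr s hs h
    simp only [Finset.mem_filter, Finset.mem_range, Prod.mk.injEq] at hr hs h
    have h1 : r ≡ s [MOD M * p] := (Nat.modEq_and_modEq_iff_modEq_mul hc).1 ⟨h.1, h.2⟩
    exact Nat.ModEq.eq_of_lt_of_lt h1 hr.1 hs.1
  · rintro ⟨x, y⟩ h
    simp only [Finset.mem_filter, Finset.mem_range, Finset.mem_product] at h
    obtain ⟨⟨hx, hAx⟩, hy, hBy⟩ := h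
    have k := (Nat.chineseRemainder hc x y).2
    have kx : (Nat.chineseRemainder hc x y : ℕ) % M = x := by
      rw [k.1, Nat.mod_eq_of_lt hx]
    have ky : (Nat.chineseRemainder hc x y : ℕ) % p = y := by
      rw [k.2, Nat.mod_eq_of_lt hy]
    refine ⟨Nat.chineseRemainder hc x y, ?_, ?_⟩
    · simp only [Finset.mem_filter, Finset.mem_range]
      refine ⟨Nat.chineseRemainder_lt_mul hc x y hM.ne' hp.ne', ?_, ?_⟩
      · rw [← hA, kx]; exact hAx
      · rw [← hB, ky]; exact hBy
    · rw [kx, ky]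

lemma aux_one (p : ℕ) (hp : 0 < p) (a : ℤ) :
    ((Finset.range p).filter fun r : ℕ => (r : ℤ) ≡ a [ZMOD p]).card = 1 := by
  rw [Finset.card_eq_one]
  have hp' : (0 : ℤ) < p := by exact_mod_cast hp
  have h0 := Int.emod_nonneg a hp'.ne'
  have h1 := Int.emod_lt_of_pos a hp'
  refine ⟨(a % p).toNat, ?_⟩
  ext r
  rw [Finset.mem_filter, Finset.mem_range, Finset.mem_singleton, Int.ModEq]
  constructor
  · rintro ⟨hr, h⟩
    rw [Int.emod_eq_of_lt (by positivity) (by exact_mod_cast hr)] at h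
    omega
  · intro h
    have : (r : ℤ) = a % p := by omega
    refine ⟨by omega, ?_⟩
    rw [this, Int.emod_emod_of_dvd _ (dvd_refl _)]

lemma aux_count (P : Finset ℕ) (hP : ∀ p ∈ P, p.Prime) (h3 : 3 ∉ P) (c : ℤ) (a : ℕ → ℤ) :
    ((Finset.range (3 * ∏ p ∈ P, p)).filter fun r : ℕ =>
          (r : ℤ) ≡ c [ZMOD 3] ∧ ∀ p ∈ P, ¬ (r : ℤ) ≡ a p [ZMOD 3 * p]).card
      = ∏ p ∈ P, (if a p ≡ c [ZMOD 3] then p - 1 else p) := by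
  induction P using Finset.induction_on with
  | empty => simpa using aux_one 3 (by norm_num) c
  | insert p P hp ih =>
    have hpp : p.Prime := hP p (Finset.mem_insert_self _ _)
    have hP' : ∀ q ∈ P, q.Prime := fun q hq => hP q (Finset.mem_insert_of_mem hq)
    have h3p : 3 ≠ p := fun h => h3 (h ▸ Finset.mem_insert_self _ _)
    have c3 : Nat.Coprime 3 p := (Nat.coprime_primes Nat.prime_three hpp).2 h3p
    have hMpos : 0 < 3 * ∏ q ∈ P, q :=
      Nat.mul_pos (by norm_num) (Finset.prod_pos fun q hq => (hP' q hq).pos)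
    have hcop : Nat.Coprime (3 * ∏ q ∈ P, q) p := by
      refine Nat.Coprime.mul_left c3 (Nat.Coprime.prod_left fun q hq => ?_)
      exact (Nat.coprime_primes (hP' q hq) hpp).2 (fun h => hp (h ▸ hq))
    rw [Finset.prod_insert hp, Finset.prod_insert hp, ← ih hP' (fun h => h3 (Finset.mem_insert_of_mem h))]
    have key := aux_crt (3 * ∏ q ∈ P, q) p hMpos hpp.pos hcop
      (fun r : ℕ => (r : ℤ) ≡ c [ZMOD 3] ∧ ∀ q ∈ P, ¬ (r : ℤ) ≡ a q [ZMOD 3 * q])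
      (fun r : ℕ => ¬ (a p ≡ c [ZMOD 3] ∧ (r : ℤ) ≡ a p [ZMOD p])) ?_ ?_
    · have hB : ((Finset.range p).filter
          (fun r : ℕ => ¬ (a p ≡ c [ZMOD 3] ∧ (r : ℤ) ≡ a p [ZMOD p]))).card
          = if a p ≡ c [ZMOD 3] then p - 1 else p := by
        split_ifs with h
        · have h1 := Finset.card_filter_add_card_filter_not (s := Finset.range p)
            (fun r : ℕ => (r : ℤ) ≡ a p [ZMOD p])
          rw [aux_one p hpp.pos, Finset.card_range] at h1
          simp only [h, true_and]
          omega
        · simp [h]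
      rw [hB] at key
      refine Eq.trans ?_ (key.trans (mul_comm _ _))
      congr 1
      rw [show 3 * (p * ∏ q ∈ P, q) = 3 * (∏ q ∈ P, q) * p by ring]
      refine Finset.filter_congr fun r _ => ?_
      rw [Finset.forall_mem_insert]
      have e : (r : ℤ) ≡ a p [ZMOD 3 * p] ↔ (r : ℤ) ≡ a p [ZMOD 3] ∧ (r : ℤ) ≡ a p [ZMOD p] :=
        (Int.modEq_and_modEq_iff_modEq_mul (by simpa using c3)).symm
      rw [e]
      constructor
      · rintro ⟨h1, h2, h4⟩
        exact ⟨⟨h1, h4⟩, fun ⟨h5, h6⟩ => h2 ⟨h1.trans h5.symm, h6⟩⟩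
      · rintro ⟨⟨h1, h4⟩, h2⟩
        exact ⟨h1, fun ⟨h5, h6⟩ => h2 ⟨h5.symm.trans h1, h6⟩, h4⟩
    · intro r
      have hm : ∀ d : ℤ, d ∣ ((3 * ∏ q ∈ P, q : ℕ) : ℤ) → ∀ x,
          (((r % (3 * ∏ q ∈ P, q) : ℕ) : ℤ) ≡ x [ZMOD d] ↔ (r : ℤ) ≡ x [ZMOD d]) := by
        intro d hd x
        rw [Int.natCast_mod, Int.ModEq, Int.ModEq, Int.emod_emod_of_dvd _ hd]
      refine and_congr (hm 3 (by push_cast; exact dvd_mul_right _ _) c) ?_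
      refine forall₂_congr fun q hq => not_congr (hm _ ?_ _)
      have : 3 * q ∣ 3 * ∏ q ∈ P, q := mul_dvd_mul_left _ (Finset.dvd_prod_of_mem _ hq)
      exact_mod_cast this
    · intro r
      simp only [Int.natCast_mod, Int.ModEq, Int.emod_emod_of_dvd _ (dvd_refl (p : ℤ))]

lemma aux_total (P : Finset ℕ) (hP : ∀ p ∈ P, p.Prime) (h3 : 3 ∉ P) (c : ℤ) (a : ℕ → ℤ) :
    ((Finset.range (3 * ∏ p ∈ P, p)).filter fun r : ℕ =>
          ¬ (r : ℤ) ≡ c [ZMOD 3] ∧ ∀ p ∈ P, ¬ (r : ℤ) ≡ a p [ZMOD 3 * p]).card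
      = ∏ p ∈ P, (if a p ≡ c + 1 [ZMOD 3] then p - 1 else p)
        + ∏ p ∈ P, (if a p ≡ c + 2 [ZMOD 3] then p - 1 else p) := by
  rw [← aux_count P hP h3, ← aux_count P hP h3, ← Finset.card_union_of_disjoint]
  · congr 1
    ext r
    simp only [Finset.mem_filter, Finset.mem_union]
    have : ¬ (r : ℤ) ≡ c [ZMOD 3] ↔ (r : ℤ) ≡ c + 1 [ZMOD 3] ∨ (r : ℤ) ≡ c + 2 [ZMOD 3] := by
      simp only [Int.ModEq]; omega
    rw [this]; tauto
  · rw [Finset.disjoint_left]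
    intro r h1 h2
    have h1 := (Finset.mem_filter.1 h1).2.1
    have h2 := (Finset.mem_filter.1 h2).2.1
    simp only [Int.ModEq] at h1 h2
    omega

lemma aux_split (P P₁ : Finset ℕ) (h : P₁ ⊆ P) (f g : ℕ → ℕ) :
    (∏ p ∈ P₁, f p) * (∏ p ∈ P \ P₁, g p) = ∏ p ∈ P, if p ∈ P₁ then f p else g p := by
  rw [← Finset.prod_sdiff h, mul_comm]
  congr 1
  · exact Finset.prod_congr rfl fun p hp => by rw [if_neg (Finset.mem_sdiff.1 hp).2]
  · exact Finset.prod_congr rfl fun p hp => by rw [if_pos hp]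

open Finset in
/-- For moduli `{3} ∪ {3p : p ∈ P}`, the minimum number of uncovered residues modulo
`N = 3 * ∏ p ∈ P, p` over all choices of residues equals the minimum over partitions
`P = P₁ ⊔ P₂` of `∏_{P₁}(p-1) ∏_{P₂} p + ∏_{P₁} p ∏_{P₂}(p-1)`. -/
theorem min_uncovered_eq_min_over_partitions
    (P : Finset ℕ) (hP : ∀ p ∈ P, p.Prime) (h3 : 3 ∉ P)
    (N : ℕ) (hN : N = 3 * ∏ p ∈ P, p) :
    sInf {k : ℕ | ∃ (a₀ : ℤ) (a : ℕ → ℤ),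
        k = ((Finset.range N).filter fun r : ℕ =>
          ¬ (r : ℤ) ≡ a₀ [ZMOD 3] ∧ ∀ p ∈ P, ¬ (r : ℤ) ≡ a p [ZMOD 3 * p]).card}
      = sInf {k : ℕ | ∃ P₁ ⊆ P,
        k = (∏ p ∈ P₁, (p - 1)) * (∏ p ∈ P \ P₁, p)
            + (∏ p ∈ P₁, p) * (∏ p ∈ P \ P₁, (p - 1))} := by
  subst hN
  apply le_antisymm
  · refine le_csInf ⟨_, ∅, Finset.empty_subset _, rfl⟩ ?_
    rintro k ⟨P₁, h, rfl⟩
    refine Nat.sInf_le ⟨0, fun p => if p ∈ P₁ then 1 else 2, ?_⟩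
    rw [aux_total P hP h3, aux_split P P₁ h, aux_split P P₁ h]
    congr 1
    · refine Finset.prod_congr rfl fun p _ => ?_
      by_cases hp : p ∈ P₁ <;> simp [hp, Int.ModEq]
    · refine Finset.prod_congr rfl fun p _ => ?_
      by_cases hp : p ∈ P₁ <;> simp [hp, Int.ModEq]
  · refine le_csInf ⟨_, 0, 0, rfl⟩ ?_
    rintro k ⟨c, a, rfl⟩
    refine le_trans (Nat.sInf_le ⟨P.filter fun p => a p ≡ c + 1 [ZMOD 3],
      Finset.filter_subset _ _, rfl⟩) ?_
    rw [aux_total P hP h3, aux_split P _ (Finset.filter_subset _ _),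
      aux_split P _ (Finset.filter_subset _ _)]
    refine add_le_add (Finset.prod_le_prod' fun p hp => ?_) (Finset.prod_le_prod' fun p hp => ?_)
    · simp [hp]
    · simp only [Finset.mem_filter, hp, true_and]
      split_ifs with h1 h2 h2
      · simp only [Int.ModEq] at h1 h2
        omega
      all_goals omega
end

section
/- Let q be a prime and let b₁, ..., b_r be positive integers that are pairwise coprime and each coprime to q, and set N = q·∏_{i=1}^r b_i. Consider the moduli n_i = q·b_i for 1 ≤ i ≤ r. Then the minimum, over all choices of residues a_i (mod q·b_i), of the number of residues m with 0 ≤ m < N satisfying m ≢ a_i (mod q·b_i) for all i, equals (N/q) times the minimum, over all functions f : {1,...,r} → {1,...,q}, of ∑_{t=1}^{q} ∏_{i : f(i)=t} (1 − 1/b_i), where an empty product equals 1. -/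
/-- The Chinese remainder map. -/
def crtMap (q : ℕ) (hq : 0 < q) {r : ℕ} (b : Fin r → ℕ) (hb : ∀ i, 0 < b i) (N : ℕ) (m : Fin N) :
    Fin q × (∀ i, Fin (b i)) :=
  (⟨m.1 % q, Nat.mod_lt _ hq⟩, fun i => ⟨m.1 % b i, Nat.mod_lt _ (hb i)⟩)

theorem crtMap_bijective (q : ℕ) (hq : 0 < q) {r : ℕ} (b : Fin r → ℕ) (hb : ∀ i, 0 < b i)
    (hcop : ∀ i j, i ≠ j → Nat.Coprime (b i) (b j))
    (hcopq : ∀ i, Nat.Coprime (b i) q)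
    (N : ℕ) (hN : N = q * ∏ i, b i) : Function.Bijective (crtMap q hq b hb N) := by
  rw [Fintype.bijective_iff_injective_and_card]
  refine ⟨?_, by simp [hN]⟩
  intro m m' h
  simp only [crtMap, Prod.mk.injEq, Fin.mk.injEq, funext_iff] at h
  obtain ⟨h1, h2⟩ := h
  have hp : (m.1 : ℕ) ≡ m'.1 [MOD ∏ i, b i] := by
    rw [Nat.modEq_iff_dvd]
    push_cast
    apply Fintype.prod_dvd_of_coprime
    · intro i j hij
      exact Nat.isCoprime_iff_coprime.mpr (hcop i j hij)
    · intro i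
      exact (Nat.modEq_iff_dvd).1 (h2 i)
  have hc : Nat.Coprime q (∏ i, b i) := Nat.Coprime.prod_right fun i _ => (hcopq i).symm
  have := (Nat.modEq_and_modEq_iff_modEq_mul hc).1 ⟨h1, hp⟩
  rw [← hN] at this
  exact Fin.ext (this.eq_of_lt_of_lt m.2 m'.2)

theorem uncovered_card (q : ℕ) (hq : 0 < q) {r : ℕ} (b : Fin r → ℕ) (hb : ∀ i, 0 < b i)
    (hcop : ∀ i j, i ≠ j → Nat.Coprime (b i) (b j))
    (hcopq : ∀ i, Nat.Coprime (b i) q)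
    (N : ℕ) (hN : N = q * ∏ i, b i) (a : Fin r → ℤ) (f : Fin r → Fin q)
    (hf : ∀ i, (f i : ℤ) = a i % q) :
    (((Finset.range N).filter fun m : ℕ =>
          ∀ i, ¬ (m : ℤ) ≡ a i [ZMOD q * b i]).card : ℝ) = ((N : ℝ) / q) *
       ∑ t : Fin q, ∏ i ∈ Finset.univ.filter fun i => f i = t, (1 - 1 / (b i : ℝ)) := by
  have hc0 : ∀ i, ∃ c : Fin (b i), (c : ℤ) = a i % b i := by
    intro i
    have hbi : (0 : ℤ) < b i := by exact_mod_cast hb i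
    have h1 := Int.emod_nonneg (a i) hbi.ne'
    have h2 := Int.emod_lt_of_pos (a i) hbi
    exact ⟨⟨(a i % b i).toNat, by omega⟩, by simp [h1]⟩
  choose c hc using hc0
  have key : ∀ m : Fin N, (∀ i, ¬ ((m : ℕ) : ℤ) ≡ a i [ZMOD q * b i]) ↔
      ∀ i, ¬ ((crtMap q hq b hb N m).1 = f i ∧ (crtMap q hq b hb N m).2 i = c i) := by
    intro m
    refine forall_congr' fun i => not_congr ?_
    rw [← Int.modEq_and_modEq_iff_modEq_mul (by simpa using (hcopq i).symm)]
    simp only [crtMap, Fin.ext_iff, Int.ModEq, ← hf, ← hc]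
    norm_cast
  have h1 : ((Finset.range N).filter fun m : ℕ =>
          ∀ i, ¬ (m : ℤ) ≡ a i [ZMOD q * b i]).card =
      ((Finset.univ : Finset (Fin N)).filter fun m : Fin N =>
          ∀ i, ¬ ((m : ℕ) : ℤ) ≡ a i [ZMOD q * b i]).card := by
    symm
    apply Finset.card_bij (fun (m : Fin N) _ => (m : ℕ))
    · intro m hm
      simp only [Finset.mem_filter, Finset.mem_univ, true_and, Finset.mem_range] at hm ⊢
      exact ⟨m.2, hm⟩
    · intro m _ m' _ h
      exact Fin.ext h
    · intro m hm
      simp only [Finset.mem_filter, Finset.mem_range] at hm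
      exact ⟨⟨m, hm.1⟩, by simpa using hm.2, rfl⟩
  have h2 : ((Finset.univ : Finset (Fin N)).filter fun m : Fin N =>
          ∀ i, ¬ ((m : ℕ) : ℤ) ≡ a i [ZMOD q * b i]).card =
      ((Finset.univ : Finset (Fin q × (∀ i, Fin (b i)))).filter fun x =>
          ∀ i, ¬ (x.1 = f i ∧ x.2 i = c i)).card := by
    have hbij := crtMap_bijective q hq b hb hcop hcopq N hN
    apply Finset.card_bij (fun m _ => crtMap q hq b hb N m)
    · intro m hm
      simp only [Finset.mem_filter, Finset.mem_univ, true_and] at hm ⊢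
      exact (key m).1 hm
    · intro m _ m' _ h
      exact hbij.1 h
    · intro x hx
      obtain ⟨m, rfl⟩ := hbij.2 x
      simp only [Finset.mem_filter, Finset.mem_univ, true_and] at hx
      exact ⟨m, by simpa only [Finset.mem_filter, Finset.mem_univ, true_and] using (key m).2 hx, rfl⟩
  have h3 : ((Finset.univ : Finset (Fin q × (∀ i, Fin (b i)))).filter fun x =>
          ∀ i, ¬ (x.1 = f i ∧ x.2 i = c i)).card =
      ∑ t : Fin q, ∏ i, (Finset.univ.filter fun y : Fin (b i) => ¬ (t = f i ∧ y = c i)).card := by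
    simp_rw [← Fintype.card_piFinset]
    rw [← Finset.card_sigma]
    apply Finset.card_bij (fun x _ => ⟨x.1, x.2⟩)
    · intro x hx
      simpa using hx
    · rintro ⟨x, y⟩ _ ⟨x', y'⟩ _ h
      simpa using h
    · rintro ⟨t, y⟩ h
      exact ⟨(t, y), by simpa using h, rfl⟩
  have h4 : ∀ t i, ((Finset.univ.filter fun y : Fin (b i) => ¬ (t = f i ∧ y = c i)).card : ℝ) =
      b i * (if f i = t then (1 - 1 / (b i : ℝ)) else 1) := by
    intro t i
    have hbi : (b i : ℝ) ≠ 0 := by exact_mod_cast (hb i).ne'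
    by_cases h : f i = t
    · subst h
      simp only [true_and, if_true]
      rw [Finset.filter_ne', Finset.card_erase_of_mem (Finset.mem_univ _), Finset.card_univ,
        Fintype.card_fin, Nat.cast_sub (hb i)]
      field_simp
      simp
    · simp [h, Ne.symm h]
  rw [h1, h2, h3]
  push_cast
  simp_rw [h4, Finset.prod_mul_distrib, ← Finset.mul_sum, Finset.prod_filter]
  have hq' : (q : ℝ) ≠ 0 := by exact_mod_cast hq.ne'
  rw [hN]
  push_cast
  rw [mul_div_cancel_left₀ _ hq']

open Finset in
/-- For moduli `n_i = q * b_i` with `q` prime and the `b_i` pairwise coprime and coprime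
to `q`, the minimum number of uncovered residues modulo `N = q * ∏ b_i` equals `N/q` times
the minimum over all partitions of the index set into `q` parts (encoded by functions
`f : Fin r → Fin q`) of `∑_t ∏_{i : f i = t} (1 - 1/b_i)`. -/
theorem min_uncovered_eq_partition_formula
    (q : ℕ) (hq : q.Prime) (r : ℕ) (b : Fin r → ℕ)
    (hb : ∀ i, 0 < b i)
    (hcop : ∀ i j, i ≠ j → Nat.Coprime (b i) (b j))
    (hcopq : ∀ i, Nat.Coprime (b i) q)
    (N : ℕ) (hN : N = q * ∏ i, b i) :
    ((sInf {k : ℕ | ∃ a : Fin r → ℤ,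
        k = ((Finset.range N).filter fun m : ℕ =>
          ∀ i, ¬ (m : ℤ) ≡ a i [ZMOD q * b i]).card} : ℕ) : ℝ)
      = ((N : ℝ) / q) *
        sInf {v : ℝ | ∃ f : Fin r → Fin q,
          v = ∑ t : Fin q, ∏ i ∈ Finset.univ.filter fun i => f i = t, (1 - 1 / (b i : ℝ))} := by
  have hq0 := hq.pos
  set A := {k : ℕ | ∃ a : Fin r → ℤ,
        k = ((Finset.range N).filter fun m : ℕ =>
          ∀ i, ¬ (m : ℤ) ≡ a i [ZMOD q * b i]).card} with hA
  set B := {v : ℝ | ∃ f : Fin r → Fin q,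
          v = ∑ t : Fin q, ∏ i ∈ Finset.univ.filter fun i => f i = t, (1 - 1 / (b i : ℝ))} with hB
  have hBfin : B.Finite := by
    refine (Set.finite_range (fun f : Fin r → Fin q =>
      ∑ t : Fin q, ∏ i ∈ Finset.univ.filter fun i => f i = t, (1 - 1 / (b i : ℝ)))).subset ?_
    rintro v ⟨f, rfl⟩
    exact ⟨f, rfl⟩
  have hBne : B.Nonempty := ⟨_, fun _ => ⟨0, hq0⟩, rfl⟩
  have hAne : A.Nonempty := ⟨_, fun _ => 0, rfl⟩
  apply le_antisymm
  · obtain ⟨f, hf⟩ := hBne.csInf_mem hBfin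
    rw [hf, ← uncovered_card q hq0 b hb hcop hcopq N hN (fun i => ((f i : ℕ) : ℤ)) f (by
      intro i
      exact (Int.emod_eq_of_lt (by positivity) (by exact_mod_cast (f i).2)).symm)]
    exact Nat.cast_le.mpr (Nat.sInf_le ⟨_, rfl⟩)
  · obtain ⟨a, ha⟩ := Nat.sInf_mem hAne
    have hf0 : ∀ i, ∃ c : Fin q, (c : ℤ) = a i % q := by
      intro i
      have hbi : (0 : ℤ) < q := by exact_mod_cast hq0
      have h1 := Int.emod_nonneg (a i) hbi.ne'
      have h2 := Int.emod_lt_of_pos (a i) hbi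
      exact ⟨⟨(a i % q).toNat, by omega⟩, by simp [h1]⟩
    choose f hf using hf0
    rw [ha, uncovered_card q hq0 b hb hcop hcopq N hN a f hf]
    exact mul_le_mul_of_nonneg_left (csInf_le hBfin.bddBelow ⟨f, rfl⟩) (by positivity)
end

section
/- Let p₁, ..., p_n be distinct primes and let I, J ⊆ {1,...,n} be disjoint subsets, not both empty. Then ∏_{i∈I}(1 − 1/p_i) ≠ ∏_{j∈J}(1 − 1/p_j) (as rational numbers), where an empty product equals 1; equivalently, ∏_{i∈I}(p_i − 1)·∏_{j∈J} p_j ≠ ∏_{j∈J}(p_j − 1)·∏_{i∈I} p_i. -/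
theorem aux_max_ne (n : ℕ) (p : Fin n → ℕ) (hp : ∀ i, (p i).Prime)
    (hinj : Function.Injective p)
    (I J : Finset (Fin n)) (hdisj : Disjoint I J) (m : Fin n) (hm : m ∈ I)
    (hmax : ∀ k ∈ I, p k ≤ p m) :
    (∏ i ∈ I, (p i - 1)) * (∏ j ∈ J, p j) ≠ (∏ j ∈ J, (p j - 1)) * (∏ i ∈ I, p i) := by
  intro h
  have hd : p m ∣ (∏ i ∈ I, (p i - 1)) * (∏ j ∈ J, p j) := by
    rw [h]
    exact Dvd.dvd.mul_left (Finset.dvd_prod_of_mem p hm) _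
  rcases (hp m).prime.dvd_or_dvd hd with h1 | h1
  · obtain ⟨i, hi, hdi⟩ := (hp m).prime.exists_mem_finset_dvd h1
    have h2 := (hp i).two_le
    have h3 := Nat.le_of_dvd (by omega) hdi
    have h4 := hmax i hi
    omega
  · obtain ⟨j, hj, hdj⟩ := (hp m).prime.exists_mem_finset_dvd h1
    have h2 := hinj ((Nat.prime_dvd_prime_iff_eq (hp m) (hp j)).1 hdj)
    subst h2
    exact Finset.disjoint_left.1 hdisj hm hj

theorem aux_prod_eq (n : ℕ) (p : Fin n → ℕ) (hp : ∀ i, (p i).Prime) (I : Finset (Fin n)) :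
    (∏ i ∈ I, (1 - 1 / (p i : ℚ))) = ((∏ i ∈ I, (p i - 1) : ℕ) : ℚ) / ((∏ i ∈ I, p i : ℕ) : ℚ) := by
  rw [Nat.cast_prod, Nat.cast_prod, ← Finset.prod_div_distrib]
  refine Finset.prod_congr rfl fun i _ => ?_
  have h0 : (p i : ℚ) ≠ 0 := by exact_mod_cast (hp i).ne_zero
  rw [Nat.cast_sub (hp i).one_lt.le]
  field_simp
  simp


open Finset in
/-- Disjoint, not-both-empty subsets of a family of distinct primes give distinct values of
`∏ (1 - 1/p)`; equivalently `∏_{I}(p_i - 1) ∏_{J} p_j ≠ ∏_{J}(p_j - 1) ∏_{I} p_i`. -/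
theorem prod_one_sub_inv_ne_of_disjoint
    (n : ℕ) (p : Fin n → ℕ) (hp : ∀ i, (p i).Prime) (hinj : Function.Injective p)
    (I J : Finset (Fin n)) (hdisj : Disjoint I J) (hne : (I ∪ J).Nonempty) :
    (∏ i ∈ I, (1 - 1 / (p i : ℚ))) ≠ (∏ j ∈ J, (1 - 1 / (p j : ℚ))) ∧
    (∏ i ∈ I, (p i - 1)) * (∏ j ∈ J, p j) ≠ (∏ j ∈ J, (p j - 1)) * (∏ i ∈ I, p i) := by
  have key : (∏ i ∈ I, (p i - 1)) * (∏ j ∈ J, p j) ≠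
      (∏ j ∈ J, (p j - 1)) * (∏ i ∈ I, p i) := by
    obtain ⟨m, hm, hmax⟩ := Finset.exists_max_image (I ∪ J) p hne
    rcases Finset.mem_union.1 hm with h | h
    · exact aux_max_ne n p hp hinj I J hdisj m h
        fun k hk => hmax k (Finset.mem_union_left _ hk)
    · exact (aux_max_ne n p hp hinj J I hdisj.symm m h
        fun k hk => hmax k (Finset.mem_union_right _ hk)).symm
  refine ⟨fun h => key ?_, key⟩
  have hI : ∀ K : Finset (Fin n), ((∏ i ∈ K, p i : ℕ) : ℚ) ≠ 0 := fun K =>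
    Nat.cast_ne_zero.2 (Finset.prod_ne_zero_iff.2 fun i _ => (hp i).ne_zero)
  rw [aux_prod_eq n p hp, aux_prod_eq n p hp, div_eq_div_iff (hI I) (hI J)] at h
  exact_mod_cast h
end

section
/- Let p₁, ..., p_n be distinct primes (n ≥ 1) and let w_i = −log(1 − 1/p_i). Then ε := min{ |∑_{i∈I} w_i − ∑_{j∈J} w_j| : I, J ⊆ {1,...,n} disjoint and not both empty } is strictly positive. -/
theorem gap_aux {n : ℕ} (p : Fin n → ℕ) (hp : ∀ i, (p i).Prime)
    (hinj : Function.Injective p)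
    (w : Fin n → ℝ) (hw : ∀ i, w i = -Real.log (1 - 1 / (p i : ℝ)))
    (I J : Finset (Fin n)) (hd : Disjoint I J) (k : Fin n) (hk : k ∈ I)
    (hmax : ∀ i ∈ I ∪ J, p i ≤ p k) (h : ∑ i ∈ I, w i = ∑ j ∈ J, w j) : False := by
  have hpos : ∀ i, (0 : ℝ) < p i := fun i => by exact_mod_cast (hp i).pos
  have hne : ∀ i, (0 : ℝ) < 1 - 1 / (p i : ℝ) := fun i => by
    have h1 : (1 : ℝ) < p i := by exact_mod_cast (hp i).one_lt
    rw [sub_pos, div_lt_one (hpos i)]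
    exact h1
  have hexp : ∀ S : Finset (Fin n),
      Real.exp (-∑ i ∈ S, w i) * ∏ i ∈ S, (p i : ℝ) = ((∏ i ∈ S, (p i - 1) : ℕ) : ℝ) := by
    intro S
    rw [← Finset.sum_neg_distrib, Real.exp_sum, ← Finset.prod_mul_distrib, Nat.cast_prod]
    refine Finset.prod_congr rfl fun i _ => ?_
    rw [hw, neg_neg, Real.exp_log (hne i), Nat.cast_sub (hp i).one_le]
    have := (hpos i).ne'
    field_simp
    simp
  have hI := hexp I
  have hJ := hexp J
  rw [h] at hI
  have hN : (∏ i ∈ I, (p i - 1)) * ∏ j ∈ J, p j = (∏ j ∈ J, (p j - 1)) * ∏ i ∈ I, p i := by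
    have : (((∏ i ∈ I, (p i - 1) : ℕ) : ℝ)) * ∏ j ∈ J, (p j : ℝ)
        = ((∏ j ∈ J, (p j - 1) : ℕ) : ℝ) * ∏ i ∈ I, (p i : ℝ) := by
      rw [← hI, ← hJ]; ring
    exact_mod_cast this
  have hdvd : p k ∣ (∏ i ∈ I, (p i - 1)) * ∏ j ∈ J, p j := by
    rw [hN]
    exact Dvd.dvd.mul_left (Finset.dvd_prod_of_mem p hk) _
  have hpr := (hp k).prime
  rcases hpr.dvd_or_dvd hdvd with h1 | h1
  · obtain ⟨i, hi, hdi⟩ := (hpr.dvd_finsetProd_iff _).1 h1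
    have h2 := hmax i (Finset.mem_union_left _ hi)
    have h3 := (hp i).two_le
    have h4 := Nat.le_of_dvd (by omega) hdi
    omega
  · obtain ⟨j, hj, hdj⟩ := (hpr.dvd_finsetProd_iff _).1 h1
    have := hinj ((Nat.prime_dvd_prime_iff_eq (hp k) (hp j)).1 hdj)
    subst this
    exact Finset.disjoint_left.1 hd hk hj

open Finset in
/-- For distinct primes `p₁, …, pₙ` (`n ≥ 1`) and weights `wᵢ = -log(1 - 1/pᵢ)`, the minimum
of `|∑_{i ∈ I} wᵢ - ∑_{j ∈ J} wⱼ|` over disjoint subsets `I, J` of `{1, …, n}` that are not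
both empty is strictly positive. -/
theorem min_weight_gap_pos
    (n : ℕ) (hn : 1 ≤ n) (p : Fin n → ℕ) (hp : ∀ i, (p i).Prime)
    (hinj : Function.Injective p)
    (w : Fin n → ℝ) (hw : ∀ i, w i = -Real.log (1 - 1 / (p i : ℝ))) :
    0 < sInf {d : ℝ | ∃ I J : Finset (Fin n), Disjoint I J ∧ (I ∪ J).Nonempty ∧
        d = |∑ i ∈ I, w i - ∑ j ∈ J, w j|} := by
  set S : Set ℝ := {d : ℝ | ∃ I J : Finset (Fin n), Disjoint I J ∧ (I ∪ J).Nonempty ∧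
        d = |∑ i ∈ I, w i - ∑ j ∈ J, w j|} with hS
  have hfin : S.Finite := by
    refine (Set.finite_range (fun q : Finset (Fin n) × Finset (Fin n) =>
      |∑ i ∈ q.1, w i - ∑ j ∈ q.2, w j|)).subset ?_
    rintro d ⟨I, J, -, -, rfl⟩
    exact ⟨(I, J), rfl⟩
  have hnon : S.Nonempty :=
    ⟨_, {⟨0, hn⟩}, ∅, Finset.disjoint_empty_right _, by simp, rfl⟩
  obtain ⟨I, J, hd, hIJ, he⟩ := hnon.csInf_mem hfin
  rw [he, abs_pos]
  intro h0
  have h := sub_eq_zero.1 h0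
  obtain ⟨k, hk, hmax⟩ := Finset.exists_max_image (I ∪ J) p hIJ
  rcases Finset.mem_union.1 hk with hkI | hkJ
  · exact gap_aux p hp hinj w hw I J hd k hkI hmax h
  · exact gap_aux p hp hinj w hw J I hd.symm k hkJ
      (fun i hi => hmax i (by rwa [Finset.union_comm])) h.symm
end

section
/- With the construction below, for all indices i, j with 1 ≤ i, j ≤ n one has a_i < 3·a_j; that is, the maximum of the a_i is less than three times the minimum. -/
theorem aux_nat {n : ℕ} (p : Fin n → ℕ) (hp : ∀ i, (p i).Prime)
    (hinj : Function.Injective p) (I J : Finset (Fin n)) (hd : Disjoint I J)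
    (i : Fin n) (hi : i ∈ I) (hmax : ∀ k ∈ I ∪ J, p k ≤ p i) :
    (∏ k ∈ I, (p k - 1)) * ∏ k ∈ J, p k ≠ (∏ k ∈ J, (p k - 1)) * ∏ k ∈ I, p k := by
  intro h
  have h1 : p i ∣ (∏ k ∈ I, (p k - 1)) * ∏ k ∈ J, p k := by
    rw [h]
    exact Dvd.dvd.mul_left (Finset.dvd_prod_of_mem p hi) _
  rcases (hp i).dvd_mul.1 h1 with h2 | h2
  · obtain ⟨k, hk, hk2⟩ := ((hp i).prime.dvd_finsetProd_iff _).1 h2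
    have := hmax k (Finset.mem_union_left _ hk)
    have h3 := (hp k).two_le
    have := Nat.le_of_dvd (by omega) hk2
    omega
  · obtain ⟨k, hk, hk2⟩ := ((hp i).prime.dvd_finsetProd_iff _).1 h2
    have h4 := hinj ((Nat.prime_dvd_prime_iff_eq (hp i) (hp k)).1 hk2)
    subst h4
    exact Finset.disjoint_left.1 hd hi hk

theorem aux_nat2 {n : ℕ} (p : Fin n → ℕ) (hp : ∀ i, (p i).Prime)
    (hinj : Function.Injective p) (I J : Finset (Fin n)) (hd : Disjoint I J)
    (hne : (I ∪ J).Nonempty) :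
    (∏ k ∈ I, (p k - 1)) * ∏ k ∈ J, p k ≠ (∏ k ∈ J, (p k - 1)) * ∏ k ∈ I, p k := by
  obtain ⟨i, hi, hmax⟩ := Finset.exists_max_image (I ∪ J) p hne
  rcases Finset.mem_union.1 hi with h | h
  · exact aux_nat p hp hinj I J hd i h hmax
  · exact (aux_nat p hp hinj J I hd.symm i h (by rwa [Finset.union_comm])).symm

theorem aux_real {n : ℕ} (p : Fin n → ℕ) (hp : ∀ i, (p i).Prime)
    (hinj : Function.Injective p) (w : Fin n → ℝ)
    (hw : ∀ i, w i = -Real.log (1 - 1 / (p i : ℝ)))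
    (I J : Finset (Fin n)) (hd : Disjoint I J) (hne : (I ∪ J).Nonempty) :
    ∑ i ∈ I, w i ≠ ∑ j ∈ J, w j := by
  intro h
  have hp0 : ∀ k, (0 : ℝ) < p k := fun k => by exact_mod_cast (hp k).pos
  have hp1 : ∀ k, (1 : ℝ) < p k := fun k => by exact_mod_cast (hp k).one_lt
  have hpos : ∀ k, 0 < ((p k : ℝ) - 1) / p k := fun k =>
    div_pos (by linarith [hp1 k]) (hp0 k)
  have hwe : ∀ k, w k = -Real.log (((p k : ℝ) - 1) / p k) := fun k => by
    rw [hw k, sub_div, div_self (hp0 k).ne']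
  have key : ∀ S : Finset (Fin n),
      ∑ k ∈ S, w k = -Real.log ((∏ k ∈ S, ((p k : ℝ) - 1)) / ∏ k ∈ S, (p k : ℝ)) := by
    intro S
    rw [← Finset.prod_div_distrib, Real.log_prod (fun k _ => (hpos k).ne'),
      ← Finset.sum_neg_distrib]
    exact Finset.sum_congr rfl fun k _ => hwe k
  have P : ∀ S : Finset (Fin n), 0 < ∏ k ∈ S, (p k : ℝ) := fun S =>
    Finset.prod_pos fun k _ => hp0 k
  have Q : ∀ S : Finset (Fin n), 0 < ∏ k ∈ S, ((p k : ℝ) - 1) := fun S =>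
    Finset.prod_pos fun k _ => by linarith [hp1 k]
  rw [key I, key J, neg_inj] at h
  have h2 := Real.log_injOn_pos (Set.mem_Ioi.2 (div_pos (Q I) (P I)))
    (Set.mem_Ioi.2 (div_pos (Q J) (P J))) h
  rw [div_eq_div_iff (P I).ne' (P J).ne'] at h2
  apply aux_nat2 p hp hinj I J hd hne
  have hc : ∀ k, ((p k - 1 : ℕ) : ℝ) = (p k : ℝ) - 1 := fun k => by
    rw [Nat.cast_sub (hp k).one_le, Nat.cast_one]
  have h3 : (((∏ k ∈ I, (p k - 1)) * ∏ k ∈ J, p k : ℕ) : ℝ)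
      = (((∏ k ∈ J, (p k - 1)) * ∏ k ∈ I, p k : ℕ) : ℝ) := by
    simp only [Nat.cast_mul, Nat.cast_prod, hc]
    exact h2
  exact_mod_cast h3

open Finset in
/-- In Chvátal's construction, every `aᵢ` is less than three times every `aⱼ`. -/
theorem chvatal_ratio_lt_three
    (n : ℕ) (hn : 1 ≤ n)
    (p : Fin n → ℕ) (hp : ∀ i, (p i).Prime) (hinj : Function.Injective p)
    (w : Fin n → ℝ) (hw : ∀ i, w i = -Real.log (1 - 1 / (p i : ℝ)))
    (hmono : ∀ i j : Fin n, i ≤ j → w j ≤ w i)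
    (hratio : w ⟨0, by omega⟩ ≤ 2 * w ⟨n - 1, by omega⟩)
    (ε : ℝ)
    (hε : IsLeast {d : ℝ | ∃ I J : Finset (Fin n), Disjoint I J ∧ (I ∪ J).Nonempty ∧
        d = |∑ i ∈ I, w i - ∑ j ∈ J, w j|} ε)
    (x : ℝ) (hx : 4 * n / ε < x)
    (c : ℕ)
    (hc : c = ((Finset.univ : Finset (Fin n)).filter fun i : Fin n => (i : ℕ) < n / 2).lcm
        fun i => (⌊w i * x⌋).toNat)
    (a : Fin n → ℕ)
    (ha : ∀ i : Fin n, a i = if (i : ℕ) < n / 2 then c * (⌊w i * x⌋).toNat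
        else c * (⌊w i * x⌋).toNat + 1)
    : ∀ i j : Fin n, a i < 3 * a j := by
  have hεpos : 0 < ε := by
    obtain ⟨I, J, hd, hne, he⟩ := hε.1
    rw [he]
    exact abs_pos.2 (sub_ne_zero.2 (aux_real p hp hinj w hw I J hd hne))
  have hwpos : ∀ k, 0 < w k := by
    intro k
    have h1 : (1 : ℝ) < p k := by exact_mod_cast (hp k).one_lt
    have h2 : 1 / (p k : ℝ) < 1 := by rw [div_lt_one (by linarith)]; exact h1
    have h3 : 0 < 1 / (p k : ℝ) := by positivity
    rw [hw k, neg_pos]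
    exact Real.log_neg (by linarith) (by linarith)
  have hεle : ∀ k, ε ≤ w k := by
    intro k
    apply hε.2
    refine ⟨{k}, ∅, by simp, by simp, ?_⟩
    simp [abs_of_pos (hwpos k)]
  have hn' : (1 : ℝ) ≤ n := by exact_mod_cast hn
  have hx' : 4 * n < x * ε := (div_lt_iff₀ hεpos).1 hx
  have hx0 : 0 < x := lt_of_le_of_lt (by positivity) hx
  have h4 : ∀ k, (4 : ℝ) ≤ w k * x := fun k => by
    nlinarith [mul_le_mul_of_nonneg_right (hεle k) hx0.le]
  have hfl : ∀ k, (4 : ℤ) ≤ ⌊w k * x⌋ := fun k => Int.le_floor.2 (by exact_mod_cast h4 k)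
  have hr : ∀ i j, w i ≤ 2 * w j := fun i j => by
    have h1 := hmono ⟨0, by omega⟩ i (Fin.mk_le_of_le_val (by omega))
    have h2 := hmono j ⟨n - 1, by omega⟩ (Fin.le_def.2 (by simp only; omega))
    linarith
  have hm : ∀ i j, ⌊w i * x⌋ < 2 * (⌊w j * x⌋ + 1) := fun i j => by
    have h1 := Int.floor_le (w i * x)
    have h2 := Int.lt_floor_add_one (w j * x)
    have h3 := mul_le_mul_of_nonneg_right (hr i j) hx0.le
    have : ((⌊w i * x⌋ : ℤ) : ℝ) < ((2 * (⌊w j * x⌋ + 1) : ℤ) : ℝ) := by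
      push_cast; linarith
    exact_mod_cast this
  have hc1 : 1 ≤ c := by
    rw [Nat.one_le_iff_ne_zero, hc, Ne, Finset.lcm_eq_zero_iff]
    rintro ⟨k, -, hk⟩
    have := hfl k
    omega
  intro i j
  have e1 : 4 ≤ (⌊w j * x⌋).toNat := by have := hfl j; omega
  have e2 : (⌊w i * x⌋).toNat ≤ 2 * (⌊w j * x⌋).toNat + 1 := by
    have := hfl j; have := hfl i; have := hm i j; omega
  have hi : a i ≤ c * (⌊w i * x⌋).toNat + 1 := by rw [ha i]; split_ifs <;> omega
  have hj : c * (⌊w j * x⌋).toNat ≤ a j := by rw [ha j]; split_ifs <;> omega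
  have f1 := Nat.mul_le_mul_left c e1
  have f2 := Nat.mul_le_mul_left c e2
  have f3 : c * (2 * (⌊w j * x⌋).toNat + 1) = 2 * (c * (⌊w j * x⌋).toNat) + c := by ring
  omega
end

section
/- With the construction below, for every subset I ⊆ {1,...,n} with 10·|I| ≤ n, one has ∑_{i∈I} a_i < (1/2)·∑_{i=1}^{n} a_i (Chvátal's condition (a)). -/
open Finset in
/-- Chvátal's condition (a): if `10|I| ≤ n` then `∑_{i ∈ I} aᵢ < (1/2) ∑ᵢ aᵢ`. -/
theorem chvatal_condition_a
    (n : ℕ) (hn : 1 ≤ n)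
    (p : Fin n → ℕ) (hp : ∀ i, (p i).Prime) (hinj : Function.Injective p)
    (w : Fin n → ℝ) (hw : ∀ i, w i = -Real.log (1 - 1 / (p i : ℝ)))
    (hmono : ∀ i j : Fin n, i ≤ j → w j ≤ w i)
    (hratio : w ⟨0, by omega⟩ ≤ 2 * w ⟨n - 1, by omega⟩)
    (ε : ℝ)
    (hε : IsLeast {d : ℝ | ∃ I J : Finset (Fin n), Disjoint I J ∧ (I ∪ J).Nonempty ∧
        d = |∑ i ∈ I, w i - ∑ j ∈ J, w j|} ε)
    (x : ℝ) (hx : 4 * n / ε < x)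
    (c : ℕ)
    (hc : c = ((Finset.univ : Finset (Fin n)).filter fun i : Fin n => (i : ℕ) < n / 2).lcm
        fun i => (⌊w i * x⌋).toNat)
    (a : Fin n → ℕ)
    (ha : ∀ i : Fin n, a i = if (i : ℕ) < n / 2 then c * (⌊w i * x⌋).toNat
        else c * (⌊w i * x⌋).toNat + 1)
    : ∀ I : Finset (Fin n), 10 * I.card ≤ n → (∑ i ∈ I, (a i : ℝ)) < (1 / 2) * ∑ i : Fin n, (a i : ℝ) := by
  have hε0 : 0 ≤ ε := by
    obtain ⟨I, J, -, -, h⟩ := hε.1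
    rw [h]; exact abs_nonneg _
  have hx0 : 0 ≤ x := le_trans (by positivity) hx.le
  intro I hI
  have hIr : 10 * (I.card : ℝ) ≤ n := by exact_mod_cast hI
  have hnr : (1 : ℝ) ≤ n := by exact_mod_cast hn
  -- bounded-ratio case
  have key : ∀ M : ℕ, 1 ≤ M → (∀ i, M ≤ a i) → (∀ i, a i ≤ 4 * M) →
      (∑ i ∈ I, (a i : ℝ)) < (1 / 2) * ∑ i : Fin n, (a i : ℝ) := by
    intro M hM h1 h2
    have hMr : (1 : ℝ) ≤ M := by exact_mod_cast hM
    have hu : (∑ i ∈ I, (a i : ℝ)) ≤ I.card * (4 * M : ℝ) := by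
      rw [← nsmul_eq_mul]
      exact Finset.sum_le_card_nsmul _ _ _ (fun i _ => by exact_mod_cast h2 i)
    have hl : (n : ℝ) * M ≤ ∑ i : Fin n, (a i : ℝ) := by
      have := Finset.card_nsmul_le_sum (Finset.univ : Finset (Fin n)) (fun i => (a i : ℝ)) (M : ℝ)
        (fun i _ => by exact_mod_cast h1 i)
      simpa [nsmul_eq_mul] using this
    nlinarith [mul_le_mul_of_nonneg_right hIr (by positivity : (0 : ℝ) ≤ M),
      mul_le_mul hnr hMr (by norm_num) (by positivity)]
  by_cases hc0 : c = 0
  · have ha' : ∀ i : Fin n, a i = if (i : ℕ) < n / 2 then 0 else 1 := by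
      intro i; rw [ha i, hc0]; simp
    have hu : (∑ i ∈ I, (a i : ℝ)) ≤ I.card * (1 : ℝ) := by
      rw [← nsmul_eq_mul]
      refine Finset.sum_le_card_nsmul _ _ _ (fun i _ => ?_)
      rw [ha' i]; split_ifs <;> simp
    have hs : ∀ k m : ℕ, m ≤ k + ∑ i ∈ Finset.range m, (if i < k then 0 else 1) := by
      intro k m
      induction m with
      | zero => simp
      | succ m ih => rw [Finset.sum_range_succ]; split_ifs <;> omega
    have hl : n ≤ n / 2 + ∑ i : Fin n, a i := by
      have h := hs (n / 2) n
      rw [← Fin.sum_univ_eq_sum_range (fun i => if i < n / 2 then 0 else 1) n] at h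
      simpa only [ha'] using h
    have hl2 : n ≤ 2 * ∑ i : Fin n, a i := by omega
    have hl3 : (n : ℝ) ≤ 2 * ∑ i : Fin n, (a i : ℝ) := by exact_mod_cast hl2
    linarith
  have hc1 : 1 ≤ c := Nat.one_le_iff_ne_zero.mpr hc0
  obtain ⟨b, hb⟩ : ∃ b : Fin n → ℕ, ∀ i, b i = (⌊w i * x⌋).toNat := ⟨_, fun _ => rfl⟩
  simp only [← hb] at hc ha
  obtain ⟨m, hm⟩ : ∃ m : ℕ, m = b ⟨n - 1, by omega⟩ := ⟨_, rfl⟩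
  have hbl : ∀ i, m ≤ b i := by
    intro i
    rw [hm, hb, hb]
    apply Int.toNat_le_toNat
    apply Int.floor_le_floor
    exact mul_le_mul_of_nonneg_right
      (hmono _ _ (by rw [Fin.le_def]; have := i.2; simp only; omega)) hx0
  have hbu : ∀ i, b i ≤ 2 * m + 1 := by
    intro i
    have h1 : w i * x ≤ 2 * (w ⟨n - 1, by omega⟩ * x) := by
      have := mul_le_mul_of_nonneg_right
        ((hmono ⟨0, by omega⟩ i (by rw [Fin.le_def]; simp)).trans hratio) hx0
      linarith
    have h2 := Int.lt_floor_add_one (w ⟨n - 1, by omega⟩ * x)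
    have h3 : ⌊w i * x⌋ < 2 * ⌊w ⟨n - 1, by omega⟩ * x⌋ + 2 := by
      rw [Int.floor_lt]; push_cast; linarith
    rw [hm, hb, hb]
    omega
  rcases Nat.eq_zero_or_pos m with h0 | h0
  · have hb1 : ∀ i : Fin n, (i : ℕ) < n / 2 → b i = 1 := by
      intro i hi
      have h1 := hbu i
      have h2 : b i ≠ 0 := by
        intro h
        apply hc0
        rw [hc, Finset.lcm_eq_zero_iff]
        exact ⟨i, by simpa using hi, h⟩
      omega
    have hce : c = 1 := by
      apply Nat.dvd_one.mp
      rw [hc]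
      apply Finset.lcm_dvd
      intro i hi
      rw [hb1 i (by simpa using hi)]
    apply key 1 le_rfl
    · intro i; rw [ha i, hce]; split_ifs with h
      · rw [hb1 i h]
      · omega
    · intro i; have := hbu i; rw [ha i, hce]; split_ifs with h <;> omega
  · have hcm : 1 ≤ c * m := Nat.mul_pos hc1 h0
    apply key (c * m) hcm
    · intro i
      have := Nat.mul_le_mul_left c (hbl i)
      rw [ha i]; split_ifs <;> omega
    · intro i
      have h1 : c * b i ≤ c * (3 * m) := Nat.mul_le_mul_left c (by have := hbu i; omega)
      have h2 : c * (3 * m) = 3 * (c * m) := by ring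
      rw [ha i]; split_ifs <;> omega
end

section
/- With the construction below, no integer greater than 1 divides more than ⌈n/2⌉ of the numbers a₁, ..., a_n; that is, for every integer d ≥ 2, the number of indices i ∈ {1,...,n} with d ∣ a_i is at most ⌈n/2⌉ (Chvátal's condition (b)). -/
open Finset in
/-- Chvátal's condition (b): no integer `d ≥ 2` divides more than `⌈n/2⌉` of the `aᵢ`. -/
theorem chvatal_condition_b
    (n : ℕ) (hn : 1 ≤ n)
    (p : Fin n → ℕ) (hp : ∀ i, (p i).Prime) (hinj : Function.Injective p)
    (w : Fin n → ℝ) (hw : ∀ i, w i = -Real.log (1 - 1 / (p i : ℝ)))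
    (hmono : ∀ i j : Fin n, i ≤ j → w j ≤ w i)
    (hratio : w ⟨0, by omega⟩ ≤ 2 * w ⟨n - 1, by omega⟩)
    (ε : ℝ)
    (hε : IsLeast {d : ℝ | ∃ I J : Finset (Fin n), Disjoint I J ∧ (I ∪ J).Nonempty ∧
        d = |∑ i ∈ I, w i - ∑ j ∈ J, w j|} ε)
    (x : ℝ) (hx : 4 * n / ε < x)
    (c : ℕ)
    (hc : c = ((Finset.univ : Finset (Fin n)).filter fun i : Fin n => (i : ℕ) < n / 2).lcm
        fun i => (⌊w i * x⌋).toNat)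
    (a : Fin n → ℕ)
    (ha : ∀ i : Fin n, a i = if (i : ℕ) < n / 2 then c * (⌊w i * x⌋).toNat
        else c * (⌊w i * x⌋).toNat + 1)
    : ∀ d : ℕ, 2 ≤ d → ((Finset.univ : Finset (Fin n)).filter fun i => d ∣ a i).card ≤ (n + 1) / 2 := by
  intro d hd
  have hS : ((Finset.univ : Finset (Fin n)).filter fun i : Fin n => (i : ℕ) < n / 2).card
      = n / 2 := by
    rw [Fin.card_filter_val_lt]
    omega
  have hL : ((Finset.univ : Finset (Fin n)).filter fun i : Fin n => ¬ (i : ℕ) < n / 2).card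
      = n - n / 2 := by
    have h := Finset.card_filter_add_card_filter_not (s := (Finset.univ : Finset (Fin n)))
      (fun i : Fin n => (i : ℕ) < n / 2)
    rw [hS, Finset.card_univ, Fintype.card_fin] at h
    omega
  by_cases h : ∃ i : Fin n, (i : ℕ) < n / 2 ∧ d ∣ a i
  · obtain ⟨i, hi, hdi⟩ := h
    have hsub : ((Finset.univ : Finset (Fin n)).filter fun i => d ∣ a i) ⊆
        ((Finset.univ : Finset (Fin n)).filter fun i : Fin n => (i : ℕ) < n / 2) := by
      intro j hj
      rw [Finset.mem_filter] at hj ⊢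
      refine ⟨hj.1, ?_⟩
      by_contra hjl
      have hdj := hj.2
      obtain ⟨q, hq, hqd⟩ := Nat.exists_prime_and_dvd (show d ≠ 1 by omega)
      rw [ha, if_pos hi] at hdi
      rw [ha, if_neg hjl] at hdj
      have hfc : (⌊w i * x⌋).toNat ∣ c := by
        rw [hc]
        exact Finset.dvd_lcm (f := fun i => (⌊w i * x⌋).toNat)
          (Finset.mem_filter.2 ⟨Finset.mem_univ i, hi⟩)
      have hqc : q ∣ c := by
        rcases hq.dvd_mul.1 (hqd.trans hdi) with h | h
        · exact h
        · exact h.trans hfc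
      have h1 : q ∣ 1 := (Nat.dvd_add_right (hqc.mul_right _)).1 (hqd.trans hdj)
      exact hq.one_lt.ne' (Nat.dvd_one.1 h1)
    have := Finset.card_le_card hsub
    omega
  · have hsub : ((Finset.univ : Finset (Fin n)).filter fun i => d ∣ a i) ⊆
        ((Finset.univ : Finset (Fin n)).filter fun i : Fin n => ¬ (i : ℕ) < n / 2) := by
      intro j hj
      rw [Finset.mem_filter] at hj ⊢
      exact ⟨hj.1, fun hjl => h ⟨j, hjl, hj.2⟩⟩
    have := Finset.card_le_card hsub
    omega
end

section
/- With the construction below, for all subsets I, J ⊆ {1,...,n} with I ≠ J, one has ∑_{i∈I} a_i ≠ ∑_{j∈J} a_j (Chvátal's condition (c)); that is, all 2^n subset sums of a₁, ..., a_n are distinct. -/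
theorem aux_prod {n : ℕ} (p : Fin n → ℕ) (hp : ∀ i, (p i).Prime)
    (hinj : Function.Injective p) (I J : Finset (Fin n)) (hd : Disjoint I J) (q : Fin n)
    (hq : q ∈ I) (hmax : ∀ i ∈ I ∪ J, p i ≤ p q)
    (h : (∏ i ∈ I, (p i - 1)) * ∏ j ∈ J, p j = (∏ j ∈ J, (p j - 1)) * ∏ i ∈ I, p i) : False := by
  have h1 : p q ∣ (∏ i ∈ I, (p i - 1)) * ∏ j ∈ J, p j := by
    rw [h]
    exact Dvd.dvd.mul_left (Finset.dvd_prod_of_mem p hq) _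
  rcases (hp q).dvd_mul.1 h1 with h2 | h2
  · obtain ⟨i, hi, h3⟩ := ((hp q).prime.dvd_finsetProd_iff _).1 h2
    have h4 := (hp i).two_le
    have h5 := hmax i (Finset.mem_union_left _ hi)
    have h6 := Nat.le_of_dvd (by omega) h3
    omega
  · obtain ⟨j, hj, h3⟩ := ((hp q).prime.dvd_finsetProd_iff _).1 h2
    have h4 := hinj ((Nat.prime_dvd_prime_iff_eq (hp q) (hp j)).1 h3)
    subst h4
    exact Finset.disjoint_left.1 hd hq hj

theorem aux_eps {n : ℕ} (p : Fin n → ℕ) (hp : ∀ i, (p i).Prime)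
    (hinj : Function.Injective p) (w : Fin n → ℝ)
    (hw : ∀ i, w i = -Real.log (1 - 1 / (p i : ℝ)))
    (I J : Finset (Fin n)) (hd : Disjoint I J) (hne : (I ∪ J).Nonempty)
    (h : ∑ i ∈ I, w i = ∑ j ∈ J, w j) : False := by
  have hpos : ∀ i, (0 : ℝ) < 1 - 1 / (p i : ℝ) := by
    intro i
    have h2 : (1 : ℝ) < p i := by exact_mod_cast (hp i).one_lt
    rw [sub_pos, div_lt_one (by linarith)]
    exact h2
  have key : ∀ S : Finset (Fin n),
      Real.exp (-∑ i ∈ S, w i) * ∏ i ∈ S, (p i : ℝ) = ((∏ i ∈ S, (p i - 1) : ℕ) : ℝ) := by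
    intro S
    rw [← Finset.sum_neg_distrib, Real.exp_sum, ← Finset.prod_mul_distrib, Nat.cast_prod]
    refine Finset.prod_congr rfl fun i _ => ?_
    have h2 : (1 : ℝ) < p i := by exact_mod_cast (hp i).one_lt
    rw [hw, neg_neg, Real.exp_log (hpos i), Nat.cast_sub (hp i).one_lt.le]
    field_simp
    simp
  have hN : (∏ i ∈ I, (p i - 1)) * ∏ j ∈ J, p j = (∏ j ∈ J, (p j - 1)) * ∏ i ∈ I, p i := by
    have hI := key I
    have hJ := key J
    rw [h] at hI
    have : (((∏ i ∈ I, (p i - 1)) * ∏ j ∈ J, p j : ℕ) : ℝ)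
        = (((∏ j ∈ J, (p j - 1)) * ∏ i ∈ I, p i : ℕ) : ℝ) := by
      rw [Nat.cast_mul, Nat.cast_mul, ← hI, ← hJ, Nat.cast_prod, Nat.cast_prod]
      ring
    exact_mod_cast this
  obtain ⟨q, hq, hmax⟩ := Finset.exists_max_image (I ∪ J) p hne
  rcases Finset.mem_union.1 hq with hq | hq
  · exact aux_prod p hp hinj I J hd q hq hmax hN
  · exact aux_prod p hp hinj J I hd.symm q hq (by rwa [Finset.union_comm]) hN.symm

open Finset in
/-- Chvátal's condition (c): all `2^n` subset sums of the `aᵢ` are distinct. -/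
theorem chvatal_condition_c
    (n : ℕ) (hn : 1 ≤ n)
    (p : Fin n → ℕ) (hp : ∀ i, (p i).Prime) (hinj : Function.Injective p)
    (w : Fin n → ℝ) (hw : ∀ i, w i = -Real.log (1 - 1 / (p i : ℝ)))
    (hmono : ∀ i j : Fin n, i ≤ j → w j ≤ w i)
    (hratio : w ⟨0, by omega⟩ ≤ 2 * w ⟨n - 1, by omega⟩)
    (ε : ℝ)
    (hε : IsLeast {d : ℝ | ∃ I J : Finset (Fin n), Disjoint I J ∧ (I ∪ J).Nonempty ∧
        d = |∑ i ∈ I, w i - ∑ j ∈ J, w j|} ε)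
    (x : ℝ) (hx : 4 * n / ε < x)
    (c : ℕ)
    (hc : c = ((Finset.univ : Finset (Fin n)).filter fun i : Fin n => (i : ℕ) < n / 2).lcm
        fun i => (⌊w i * x⌋).toNat)
    (a : Fin n → ℕ)
    (ha : ∀ i : Fin n, a i = if (i : ℕ) < n / 2 then c * (⌊w i * x⌋).toNat
        else c * (⌊w i * x⌋).toNat + 1)
    : ∀ I J : Finset (Fin n), I ≠ J → ∑ i ∈ I, a i ≠ ∑ j ∈ J, a j := by
  intro I J hIJ heq
  have hn' : (1 : ℝ) ≤ n := by exact_mod_cast hn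
  have hε0 : 0 < ε := by
    obtain ⟨I, J, hd, hne, h⟩ := hε.1
    rw [h, abs_pos, sub_ne_zero]
    exact fun h => aux_eps p hp hinj w hw I J hd hne h
  have hx' : 4 * n < ε * x := by
    rw [div_lt_iff₀ hε0] at hx
    linarith
  have hx0 : 0 < x := by
    by_contra h
    push Not at h
    nlinarith
  have hwpos : ∀ i, 0 < w i := by
    intro i
    rw [hw, neg_pos]
    have h2 : (1 : ℝ) < p i := by exact_mod_cast (hp i).one_lt
    apply Real.log_neg
    · rw [sub_pos, div_lt_one (by linarith)]
      exact h2
    · have : 0 < 1 / (p i : ℝ) := by positivity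
      linarith
  have hwε : ∀ i, ε ≤ w i := by
    intro i
    refine hε.2 ⟨{i}, ∅, by simp, by simp, ?_⟩
    simp [abs_of_pos (hwpos i)]
  have hwx : ∀ i, 1 ≤ w i * x := by
    intro i
    nlinarith [hwε i]
  have hfl : ∀ i, (1 : ℤ) ≤ ⌊w i * x⌋ := fun i => Int.le_floor.2 (by simpa using hwx i)
  have hc1 : (1 : ℝ) ≤ c := by
    have : c ≠ 0 := by
      rw [hc, Ne, Finset.lcm_eq_zero_iff]
      rintro ⟨i, -, hi⟩
      have := hfl i
      have hi' : (⌊w i * x⌋).toNat = 0 := hi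
      omega
    exact_mod_cast Nat.one_le_iff_ne_zero.2 this
  have hb : ∀ i, (((⌊w i * x⌋).toNat : ℕ) : ℝ) = w i * x - Int.fract (w i * x) := by
    intro i
    have h1 : (((⌊w i * x⌋).toNat : ℕ) : ℤ) = ⌊w i * x⌋ :=
      Int.toNat_of_nonneg (by have := hfl i; omega)
    have h2 : (((⌊w i * x⌋).toNat : ℕ) : ℝ) = (⌊w i * x⌋ : ℝ) := by exact_mod_cast h1
    rw [h2, Int.self_sub_fract]
  have ha' : ∀ i, (a i : ℝ) = c * (x * w i - Int.fract (w i * x))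
      + (if (i : ℕ) < n / 2 then (0 : ℝ) else 1) := by
    intro i
    rw [ha]
    split_ifs
    · push_cast
      rw [hb]
      ring
    · push_cast
      rw [hb]
      ring
  have hsum : ∀ S : Finset (Fin n), (∑ i ∈ S, (a i : ℝ))
      = c * (x * ∑ i ∈ S, w i - ∑ i ∈ S, Int.fract (w i * x))
        + ∑ i ∈ S, (if (i : ℕ) < n / 2 then (0 : ℝ) else 1) := by
    intro S
    rw [Finset.mul_sum, ← Finset.sum_sub_distrib, Finset.mul_sum, ← Finset.sum_add_distrib]
    exact Finset.sum_congr rfl fun i _ => ha' i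
  have hbd : ∀ (f : Fin n → ℝ), (∀ i, 0 ≤ f i ∧ f i ≤ 1) → ∀ S : Finset (Fin n),
      0 ≤ ∑ i ∈ S, f i ∧ ∑ i ∈ S, f i ≤ n := by
    intro f hf S
    refine ⟨Finset.sum_nonneg fun i _ => (hf i).1, ?_⟩
    calc ∑ i ∈ S, f i ≤ ∑ i ∈ S, (1 : ℝ) := Finset.sum_le_sum fun i _ => (hf i).2
      _ = (S.card : ℝ) := by simp
      _ ≤ n := by
        have := Finset.card_le_univ S
        rw [Fintype.card_fin] at this
        exact_mod_cast this
  have hF := hbd (fun i => Int.fract (w i * x))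
    (fun i => ⟨Int.fract_nonneg _, (Int.fract_lt_one _).le⟩)
  have hE := hbd (fun i => if (i : ℕ) < n / 2 then (0 : ℝ) else 1)
    (fun i => by split_ifs <;> norm_num)
  have hne : ((I \ J) ∪ (J \ I)).Nonempty := by
    rw [Finset.nonempty_iff_ne_empty]
    intro h
    rw [Finset.union_eq_empty, Finset.sdiff_eq_empty_iff_subset,
      Finset.sdiff_eq_empty_iff_subset] at h
    exact hIJ (Finset.Subset.antisymm h.1 h.2)
  have hdis : Disjoint (I \ J) (J \ I) := disjoint_sdiff_sdiff
  have heq' : ∑ i ∈ I \ J, (a i : ℝ) = ∑ i ∈ J \ I, (a i : ℝ) := by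
    have h1 := Finset.sum_inter_add_sum_sdiff I J a
    have h2 := Finset.sum_inter_add_sum_sdiff J I a
    rw [Finset.inter_comm] at h2
    have : ∑ i ∈ I \ J, a i = ∑ i ∈ J \ I, a i := by omega
    exact_mod_cast this
  have hD := hε.2 ⟨I \ J, J \ I, hdis, hne, rfl⟩
  rw [hsum, hsum] at heq'
  have hF1 := hF (I \ J)
  have hF2 := hF (J \ I)
  have hE1 := hE (I \ J)
  have hE2 := hE (J \ I)
  generalize ∑ i ∈ I \ J, w i = W1 at *
  generalize ∑ i ∈ J \ I, w i = W2 at *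
  generalize ∑ i ∈ I \ J, Int.fract (w i * x) = F1 at *
  generalize ∑ i ∈ J \ I, Int.fract (w i * x) = F2 at *
  generalize ∑ i ∈ I \ J, (if (i : ℕ) < n / 2 then (0 : ℝ) else 1) = E1 at *
  generalize ∑ i ∈ J \ I, (if (i : ℕ) < n / 2 then (0 : ℝ) else 1) = E2 at *
  rcases le_abs.1 hD with h | h
  · have h1 : 4 * n < x * W1 - x * W2 := by nlinarith
    have h2 : (3 * n : ℝ) ≤ (x * W1 - F1) - (x * W2 - F2) := by linarith
    nlinarith
  · have h1 : 4 * n < x * W2 - x * W1 := by nlinarith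
    have h2 : (3 * n : ℝ) ≤ (x * W2 - F2) - (x * W1 - F1) := by linarith
    nlinarith
end
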